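/- Transport relation for the duality connected sum: for all nonnegative integers n,m, every (possibly empty) index k, and every nonempty index l, one has Z^D_{n,m}(k_→; l) = Z^D_{n,m}(k; l_↑) as an identity in [0,∞]. -/

import Mathlib

open scoped Classical ENNReal

noncomputable section

/-- Last value of a tuple, with default `d` for the empty tuple. -/
def lastD {c : ℕ} (d : ℕ) (f : Fin c → ℕ) : ℕ :=
  if h : 0 < c then f ⟨c - 1, Nat.sub_lt h Nat.one_pos⟩ else d

/-- The duality connected sum `Z^D_{n,m}(k; l)`: the sum in `[0,∞]` of
`(∏ nᵢ^(-kᵢ)) · (∏ m_j^(-l_j)) · nₐ!·m_b!/(nₐ+m_b)!` over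
`n < n₁ < ⋯ < nₐ` and `m < m₁ < ⋯ < m_b` (with `nₐ := n` if `a = 0`,
`m_b := m` if `b = 0`). -/
def ZD (n m : ℕ) (k l : List ℕ) : ℝ≥0∞ :=
  ∑' p : (Fin k.length → ℕ) × (Fin l.length → ℕ),
    Set.indicator
      {p : (Fin k.length → ℕ) × (Fin l.length → ℕ) |
        (∀ i, n < p.1 i) ∧ StrictMono p.1 ∧ (∀ j, m < p.2 j) ∧ StrictMono p.2}
      (fun p =>
        (∏ i, ((p.1 i : ℝ≥0∞) ^ k.get i)⁻¹) * (∏ j, ((p.2 j : ℝ≥0∞) ^ l.get j)⁻¹) *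
          ((Nat.factorial (lastD n p.1) : ℝ≥0∞) * (Nat.factorial (lastD m p.2) : ℝ≥0∞) /
            (Nat.factorial (lastD n p.1 + lastD m p.2) : ℝ≥0∞))) p

/-- `k_↑`: increase the last entry of an index by `1` (`∅_↑ = ∅`). -/
def upLast : List ℕ → List ℕ
  | [] => []
  | k => k.dropLast ++ [k.getLast! + 1]

/-!
Write `T(N, M) = N! M! / (N + M)!`. The identity
`T(N + 1, M) / (N + 1) + T(N + 1, M) / M = T(N, M) / M` makes `∑_{N > a} T(N, M) / N` telescope, and
`T(N, M) ≤ 1 / (N + 1)` for `M > 0` kills the boundary term, so the sum equals `T(a, M) / M`.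
Summing `Z^D_{n,m}(k_→; l)` first over the variable attached to the appended `1` thus trades the
factor `1 / n_{a+1}` for `1 / m_b`, which is the effect of `l_↑`.
-/

lemma tsum_indicator_prod {α β : Type*} (s : Set α) (t : Set β) (f : α × β → ℝ≥0∞) :
    ∑' x, (s ×ˢ t).indicator f x = ∑' p : s, ∑' q : t, f (p, q) := by
  rw [← tsum_subtype, ← (Equiv.Set.prod s t).symm.tsum_eq, ENNReal.tsum_prod']
  rfl

lemma tsum_Ioi_eq_tsum_add_add_one {α : Type*} [AddCommMonoid α] [TopologicalSpace α]
    (f : ℕ → α) (a : ℕ) : ∑' N : Set.Ioi a, f N = ∑' j, f (a + j + 1) := by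
  have range_eq : Set.range (fun j => a + j + 1) = Set.Ioi a := by
    ext N
    exact ⟨fun ⟨j, hj⟩ => hj ▸ Nat.lt_succ_of_le (Nat.le_add_right a j),
      fun hN => (Nat.exists_eq_add_of_lt hN).imp fun _ => Eq.symm⟩
  rw [← range_eq]
  exact tsum_range f fun i j (hij : a + i + 1 = a + j + 1) => by omega

section Telescoping

open Filter Topology

variable {f g : ℕ → ℝ≥0∞}

lemma tsum_eq_of_add_succ_eq (hg : Tendsto g atTop (𝓝 0)) (h : ∀ n, f n + g (n + 1) = g n) :
    ∑' n, f n = g 0 := by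
  have partial_sum (N : ℕ) : ∑ n ∈ Finset.range N, f n + g N = g 0 := by
    induction N with
    | zero => simp
    | succ N ih => rw [Finset.sum_range_succ, add_assoc, h, ih]
  have lim := (ENNReal.tendsto_nat_tsum f).add hg
  simp only [partial_sum, add_zero] at lim
  exact tendsto_nhds_unique lim tendsto_const_nhds

lemma tsum_Ioi_eq_of_add_eq (hg : Tendsto g atTop (𝓝 0))
    (h : ∀ n, f (n + 1) + g (n + 1) = g n) (a : ℕ) : ∑' N : Set.Ioi a, f N = g a := by
  rw [tsum_Ioi_eq_tsum_add_add_one]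
  exact tsum_eq_of_add_succ_eq (g := fun j => g (a + j))
    (hg.comp (tendsto_add_atTop_nat a |>.congr fun j => add_comm j a)) fun j => h (a + j)

end Telescoping

section Connector

open Filter Topology
open scoped Nat NNReal

/-- The connector `T(N, M) = N! M! / (N + M)!` that couples the two halves of the connected sum. -/
def connector (N M : ℕ) : ℝ≥0 := N ! * M ! / (N + M)!

lemma coe_connector (N M : ℕ) :
    (connector N M : ℝ≥0∞) = (N ! : ℝ≥0∞) * (M ! : ℝ≥0∞) / ((N + M)! : ℝ≥0∞) := by
  simp [connector, ENNReal.coe_div, Nat.factorial_ne_zero]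

lemma connector_one_right (N : ℕ) : connector N 1 = ((N : ℝ≥0) + 1)⁻¹ := by
  have := Nat.factorial_ne_zero N
  simp only [connector, Nat.factorial_one, Nat.factorial_succ N]
  push_cast
  field_simp

lemma connector_succ_right (N M : ℕ) :
    connector N (M + 1) = connector N M * ((M + 1) / (N + M + 1)) := by
  have := Nat.factorial_ne_zero (N + M)
  simp only [connector, ← add_assoc, Nat.factorial_succ]
  push_cast
  field_simp

lemma connector_antitone_right (N : ℕ) : Antitone (connector N) :=
  antitone_nat_of_succ_le fun M => by
    rw [connector_succ_right]
    refine mul_le_of_le_one_right' (div_le_one_of_le₀ ?_ zero_le)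
    gcongr
    exact le_add_of_nonneg_left zero_le

lemma tendsto_connector_atTop {M : ℕ} (hM : 0 < M) :
    Tendsto (fun N => connector N M) atTop (𝓝 0) := by
  refine tendsto_of_tendsto_of_tendsto_of_le_of_le tendsto_const_nhds
    (tendsto_one_div_add_atTop_nhds_zero_nat (𝕜 := ℝ≥0)) (fun _ => zero_le) fun N => ?_
  calc connector N M ≤ connector N 1 := connector_antitone_right N hM
    _ = 1 / ((N : ℝ≥0) + 1) := by rw [connector_one_right, one_div]

lemma inv_mul_connector_add {M : ℕ} (hM : 0 < M) (N : ℕ) :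
    ((N + 1 : ℕ) : ℝ≥0)⁻¹ * connector (N + 1) M + (M : ℝ≥0)⁻¹ * connector (N + 1) M =
      (M : ℝ≥0)⁻¹ * connector N M := by
  have := Nat.factorial_ne_zero (N + M)
  simp only [connector, Nat.succ_add, Nat.factorial_succ]
  push_cast
  field_simp
  ring

lemma tsum_Ioi_inv_mul_connector {M : ℕ} (hM : 0 < M) (a : ℕ) :
    ∑' N : Set.Ioi a, ((N : ℕ) : ℝ≥0∞)⁻¹ * connector N M = (M : ℝ≥0∞)⁻¹ * connector a M := by
  refine tsum_Ioi_eq_of_add_eq (f := fun N => (N : ℝ≥0∞)⁻¹ * connector N M)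
    (g := fun N => (M : ℝ≥0∞)⁻¹ * connector N M) ?_ (fun N => ?_) a
  · have := ENNReal.Tendsto.const_mul (a := (M : ℝ≥0∞)⁻¹)
      (ENNReal.tendsto_coe.2 (tendsto_connector_atTop hM)) (.inr (by simp [hM.ne']))
    simpa using this
  · have coe_inv {K : ℕ} (hK : 0 < K) : ((K : ℝ≥0)⁻¹ : ℝ≥0) = (K : ℝ≥0∞)⁻¹ := by
      rw [ENNReal.coe_inv (by positivity), ENNReal.coe_natCast]
    rw [← coe_inv hM, ← coe_inv N.succ_pos]
    exact_mod_cast inv_mul_connector_add hM N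

end Connector

/-- The chains `n < n₁ < ⋯ < nₐ` indexing one half of the connected sum. -/
def chains (n a : ℕ) : Set (Fin a → ℕ) :=
  {p | (∀ i, n < p i) ∧ StrictMono p}

lemma mem_chains_iff_strictMono_cons {n a : ℕ} {p : Fin a → ℕ} :
    p ∈ chains n a ↔ StrictMono (Fin.cons n p : Fin (a + 1) → ℕ) :=
  Fin.strictMono_cons.symm

lemma lastD_eq_cons_last {a : ℕ} (n : ℕ) (p : Fin a → ℕ) :
    lastD n p = (Fin.cons n p : Fin (a + 1) → ℕ) (Fin.last a) := by
  cases a <;> rfl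

lemma strictMono_snoc_iff {α : Type*} [Preorder α] {a : ℕ} {p : Fin (a + 1) → α} {x : α} :
    StrictMono (Fin.snoc p x : Fin (a + 2) → α) ↔ StrictMono p ∧ p (Fin.last a) < x := by
  simp only [Fin.strictMono_iff_lt_succ, Fin.forall_fin_succ' (n := a), Fin.snoc_castSucc,
    ← Fin.castSucc_succ, Fin.succ_last, Fin.snoc_last]

lemma snoc_mem_chains_iff {n a N : ℕ} {p : Fin a → ℕ} :
    (Fin.snoc p N : Fin (a + 1) → ℕ) ∈ chains n (a + 1) ↔ p ∈ chains n a ∧ lastD n p < N := by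
  rw [mem_chains_iff_strictMono_cons, mem_chains_iff_strictMono_cons, Fin.cons_snoc_eq_snoc_cons,
    strictMono_snoc_iff, lastD_eq_cons_last]

lemma tsum_chains_succ (n a : ℕ) (f : (Fin (a + 1) → ℕ) → ℝ≥0∞) :
    ∑' p : chains n (a + 1), f p =
      ∑' p : chains n a, ∑' N : Set.Ioi (lastD n p.1), f (Fin.snoc p.1 N.1) := by
  rw [tsum_subtype, ← (Fin.snocEquiv fun _ => ℕ).tsum_eq, ENNReal.tsum_prod', ENNReal.tsum_comm,
    tsum_subtype (chains n a) fun p => ∑' N : Set.Ioi (lastD n p), f (Fin.snoc p N.1)]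
  refine tsum_congr fun p => ?_
  simp only [tsum_subtype (Set.Ioi (lastD n p)) fun N => f (Fin.snoc p N), Set.indicator_apply,
    Fin.snocEquiv, Equiv.coe_fn_mk, snoc_mem_chains_iff, Set.mem_Ioi]
  by_cases hp : p ∈ chains n a <;> simp [hp]

/-- The connected sum with an arbitrary weight `F` in place of the monomial
`∏ nᵢ^(-kᵢ) · ∏ m_j^(-l_j)`. -/
def connectedSum (n m : ℕ) {a b : ℕ} (F : (Fin a → ℕ) → (Fin b → ℕ) → ℝ≥0∞) : ℝ≥0∞ :=
  ∑' p : chains n a, ∑' q : chains m b, F p q * connector (lastD n p.1) (lastD m q.1)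

lemma connectedSum_transport (n m : ℕ) {a b : ℕ}
    (F : (Fin a → ℕ) → (Fin (b + 1) → ℕ) → ℝ≥0∞) :
    connectedSum n m (fun (p : Fin (a + 1) → ℕ) q =>
        F (Fin.init p) q * (p (Fin.last a) : ℝ≥0∞)⁻¹) =
      connectedSum n m fun p q => F p q * (q (Fin.last b) : ℝ≥0∞)⁻¹ := by
  rw [connectedSum, connectedSum, tsum_chains_succ n a fun p => ∑' q : chains m (b + 1),
    F (Fin.init p) q * (p (Fin.last a) : ℝ≥0∞)⁻¹ * connector (lastD n p) (lastD m q.1)]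
  refine tsum_congr fun p => ?_
  rw [ENNReal.tsum_comm]
  refine tsum_congr fun q => ?_
  have last_pos : 0 < q.1 (Fin.last b) := pos_of_gt (q.2.1 _)
  have lastD_succ {c : ℕ} (d : ℕ) (r : Fin (c + 1) → ℕ) : lastD d r = r (Fin.last c) := rfl
  simp only [Fin.init_snoc, Fin.snoc_last, lastD_succ, mul_assoc, ENNReal.tsum_mul_left,
    tsum_Ioi_inv_mul_connector last_pos]

/-- The monomial `∏ nᵢ^(-kᵢ)`, the weight that an index `k` contributes to the connected sum. -/
def monomial {a : ℕ} (k p : Fin a → ℕ) : ℝ≥0∞ :=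
  ∏ i, ((p i : ℝ≥0∞) ^ k i)⁻¹

lemma monomial_snoc {a : ℕ} (k : Fin a → ℕ) (x : ℕ) (p : Fin (a + 1) → ℕ) :
    monomial (Fin.snoc k x) p = monomial k (Fin.init p) * ((p (Fin.last a) : ℝ≥0∞) ^ x)⁻¹ := by
  simp only [monomial, Fin.prod_univ_castSucc, Fin.snoc_castSucc, Fin.snoc_last, Fin.init]

lemma monomial_snoc_succ {a : ℕ} (k : Fin a → ℕ) (x : ℕ) (p : Fin (a + 1) → ℕ) :
    monomial (Fin.snoc k (x + 1)) p =
      monomial (Fin.snoc k x) p * (p (Fin.last a) : ℝ≥0∞)⁻¹ := by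
  rw [monomial_snoc, monomial_snoc, ENNReal.inv_pow, ENNReal.inv_pow, pow_succ, mul_assoc]

lemma ZD_eq_connectedSum (n m : ℕ) (k l : List ℕ) :
    ZD n m k l = connectedSum n m fun p q => monomial k.get p * monomial l.get q := by
  have index_set : {p : (Fin k.length → ℕ) × (Fin l.length → ℕ) |
      (∀ i, n < p.1 i) ∧ StrictMono p.1 ∧ (∀ j, m < p.2 j) ∧ StrictMono p.2} =
      chains n k.length ×ˢ chains m l.length := by
    ext p
    simp only [chains, Set.mem_ofPred_eq, Set.mem_prod, and_assoc]
  rw [ZD, index_set, tsum_indicator_prod]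
  simp only [connectedSum, monomial, coe_connector]

-- Writing indices as `List.ofFn` avoids casts along `(k ++ [x]).length = k.length + 1`.
lemma ZD_ofFn (n m : ℕ) {a b : ℕ} (k : Fin a → ℕ) (l : Fin b → ℕ) :
    ZD n m (List.ofFn k) (List.ofFn l) =
      connectedSum n m fun p q => monomial k p * monomial l q := by
  obtain ⟨k, hk⟩ := List.equivSigmaTuple.surjective ⟨a, k⟩
  obtain ⟨l, hl⟩ := List.equivSigmaTuple.surjective ⟨b, l⟩
  cases hk
  cases hl
  rw [List.ofFn_get, List.ofFn_get, ZD_eq_connectedSum]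

lemma ofFn_snoc {α : Type*} {a : ℕ} (f : Fin a → α) (x : α) :
    List.ofFn (Fin.snoc f x : Fin (a + 1) → α) = List.ofFn f ++ [x] := by
  simp only [List.ofFn_succ', Fin.snoc_castSucc, Fin.snoc_last, List.concat_eq_append]

lemma upLast_append_singleton (l : List ℕ) (x : ℕ) : upLast (l ++ [x]) = l ++ [x + 1] := by
  have upLast_eq : upLast (l ++ [x]) = (l ++ [x]).dropLast ++ [(l ++ [x]).getLast! + 1] := by
    cases l <;> rfl
  simp [upLast_eq]

theorem ZD_transport_arrow_general (n m : ℕ) (k l : List ℕ) (x : ℕ) :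
    ZD n m (k ++ [1]) (l ++ [x]) = ZD n m k (l ++ [x + 1]) := by
  induction k using List.ofFnRec with | h a k => ?_
  induction l using List.ofFnRec with | h b l => ?_
  calc ZD n m (List.ofFn k ++ [1]) (List.ofFn l ++ [x])
    _ = connectedSum n m fun p q => monomial (Fin.snoc k 1) p * monomial (Fin.snoc l x) q := by
      rw [← ofFn_snoc, ← ofFn_snoc, ZD_ofFn]
    _ = connectedSum n m fun (p : Fin (a + 1) → ℕ) q =>
          monomial k (Fin.init p) * monomial (Fin.snoc l x) q * (p (Fin.last a) : ℝ≥0∞)⁻¹ := by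
      simp only [monomial_snoc k, pow_one, mul_right_comm]
    _ = connectedSum n m fun p q =>
          monomial k p * monomial (Fin.snoc l x) q * (q (Fin.last b) : ℝ≥0∞)⁻¹ :=
      connectedSum_transport n m fun p q => monomial k p * monomial (Fin.snoc l x) q
    _ = connectedSum n m fun p q => monomial k p * monomial (Fin.snoc l (x + 1)) q := by
      simp only [monomial_snoc_succ, mul_assoc]
    _ = ZD n m (List.ofFn k) (List.ofFn l ++ [x + 1]) := by rw [← ofFn_snoc, ZD_ofFn]

/-- **Transport relation for the duality connected sum:**
`Z^D_{n,m}(k_→; l) = Z^D_{n,m}(k; l_↑)` in `[0,∞]`, for all `n, m ≥ 0`,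
every (possibly empty) index `k` and every nonempty index `l`; here `k_→ = k ++ [1]`. -/
theorem ZD_transport_arrow (n m : ℕ) (k l : List ℕ)
    (hk1 : ∀ i ∈ k, 1 ≤ i) (hl : l ≠ []) (hl1 : ∀ i ∈ l, 1 ≤ i) :
    ZD n m (k ++ [1]) l = ZD n m k (upLast l) := by
  rw [← List.dropLast_append_getLast hl, upLast_append_singleton]
  exact ZD_transport_arrow_general n m k l.dropLast (l.getLast hl)
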